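/- Let K be a nonzero finite-dimensional graded F₂[t]-module (t in degree 1) and K₀ a finite-dimensional graded F₂-vector space such that for every degree n there is an isomorphism K₀ⁿ ≅ (K/tK)ⁿ ⊕ (ker(t·|K))ⁿ. If K₀ is bi-connected (K₀⁰ ≅ F₂ and K₀^{‖K₀‖} ≅ F₂), then K is bi-connected and ‖K‖ = ‖K₀‖. -/

import Mathlib

open Module

/-- A nonnegatively graded `F₂[t]`-module with `t` in degree 1, presented as a sequence of
`F₂`-vector spaces together with the action of `t` as degree `+1` linear maps. -/
structure GradedFMod where
  V : ℕ → Type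
  [acg : ∀ i, AddCommGroup (V i)]
  [mod : ∀ i, Module (ZMod 2) (V i)]
  t : ∀ i, V i →ₗ[ZMod 2] V (i + 1)

attribute [instance] GradedFMod.acg GradedFMod.mod

namespace GradedFMod

/-- `M` is finite dimensional over `F₂` (degreewise finite and bounded above). -/
def IsFin (M : GradedFMod) : Prop :=
  (∀ i, FiniteDimensional (ZMod 2) (M.V i)) ∧ ∃ N, ∀ i, N ≤ i → ∀ x : M.V i, x = 0

/-- `M` is nonzero. -/
def Nontriv (M : GradedFMod) : Prop := ∃ i, ∃ x : M.V i, x ≠ 0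

/-- The degree `i` part of the submodule `t·M`. -/
def tRange (M : GradedFMod) : ∀ i, Submodule (ZMod 2) (M.V i)
  | 0 => ⊥
  | (i + 1) => LinearMap.range (M.t i)

/-- `dim_{F₂} (M/tM)ⁱ`. -/
noncomputable def coinvDim (M : GradedFMod) (i : ℕ) : ℕ :=
  finrank (ZMod 2) (M.V i ⧸ M.tRange i)

/-- `dim_{F₂} (ker (t·|M))ⁱ`. -/
noncomputable def kerDim (M : GradedFMod) (i : ℕ) : ℕ :=
  finrank (ZMod 2) (LinearMap.ker (M.t i))

/-- Total `F₂`-dimension of `M`. -/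
noncomputable def totalDim (M : GradedFMod) : ℕ := ∑ᶠ i, finrank (ZMod 2) (M.V i)

/-- Total `F₂`-dimension of `M/tM`. -/
noncomputable def totalCoinvDim (M : GradedFMod) : ℕ := ∑ᶠ i, M.coinvDim i

/-- Total `F₂`-dimension of `ker(t·|M)`. -/
noncomputable def totalKerDim (M : GradedFMod) : ℕ := ∑ᶠ i, M.kerDim i

/-- The norm `‖M‖`: the top degree in which `M` is nonzero. -/
noncomputable def norm (M : GradedFMod) : ℕ := sSup {k | ∃ x : M.V k, x ≠ 0}

end GradedFMod

/-!
In the top degree of `V` the operator `t` vanishes, so there `ker t` is all of `V`; above it both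
`V ⧸ S` and `ker t` vanish. Hence a graded space `E` of dimensions `dim (V ⧸ S) + dim (ker t)` has
the same top degree as `V`, and there `0 < dim V ≤ dim E`. The graded subspace `S`, in the
application `t V`, vanishes in degree `0`, so there `dim V ≤ dim E ≤ 2 dim V` and `dim E = 1` forces
`dim V = 1`.
-/

/-- The norm `‖V‖` of a graded space: the largest degree in which `V` is nonzero, or the junk value
`0` if there is no such degree. -/
noncomputable def topDegree (V : ℕ → Type*) [∀ n, Zero (V n)] : ℕ :=
  sSup {n | ∃ x : V n, x ≠ 0}

section topDegree

variable {V : ℕ → Type*} [∀ n, Zero (V n)]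

theorem bddAbove_setOf_exists_ne_zero (hbdd : ∃ N, ∀ n, N ≤ n → ∀ x : V n, x = 0) :
    BddAbove {n | ∃ x : V n, x ≠ 0} := by
  obtain ⟨N, hN⟩ := hbdd
  exact ⟨N, fun n ⟨x, hx⟩ => le_of_not_ge fun hn => hx (hN n hn x)⟩

theorem exists_ne_zero_topDegree (hbdd : ∃ N, ∀ n, N ≤ n → ∀ x : V n, x = 0)
    (hne : ∃ n, ∃ x : V n, x ≠ 0) : ∃ x : V (topDegree V), x ≠ 0 :=
  Nat.sSup_mem hne (bddAbove_setOf_exists_ne_zero hbdd)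

theorem subsingleton_of_topDegree_lt (hbdd : ∃ N, ∀ n, N ≤ n → ∀ x : V n, x = 0) {n : ℕ}
    (hn : topDegree V < n) : Subsingleton (V n) :=
  subsingleton_of_forall_eq 0 fun x => by_contra fun hx =>
    hn.not_ge (le_csSup (bddAbove_setOf_exists_ne_zero hbdd) ⟨x, hx⟩)

end topDegree

section Gysin

variable {k : Type*} [DivisionRing k]
  {V : ℕ → Type*} [∀ n, AddCommGroup (V n)] [∀ n, Module k (V n)]
  {E : ℕ → Type*} [∀ n, AddCommGroup (E n)] [∀ n, Module k (E n)]
  {t : ∀ n, V n →ₗ[k] V (n + 1)} {S : ∀ n, Submodule k (V n)}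

theorem finrank_ker_topDegree (hbdd : ∃ N, ∀ n, N ≤ n → ∀ x : V n, x = 0)
    (t : ∀ n, V n →ₗ[k] V (n + 1)) :
    finrank k (LinearMap.ker (t (topDegree V))) = finrank k (V (topDegree V)) := by
  have := subsingleton_of_topDegree_lt hbdd (Nat.lt_succ_self (topDegree V))
  have ker_eq_top : LinearMap.ker (t (topDegree V)) = ⊤ :=
    LinearMap.ker_eq_top.mpr (Subsingleton.elim _ _)
  rw [ker_eq_top, finrank_top]

theorem topDegree_eq_of_gysin [∀ n, FiniteDimensional k (V n)] [∀ n, FiniteDimensional k (E n)]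
    (hbdd : ∃ N, ∀ n, N ≤ n → ∀ x : V n, x = 0) (hne : ∃ n, ∃ x : V n, x ≠ 0)
    (hE : ∀ n, finrank k (E n) = finrank k (V n ⧸ S n) + finrank k (LinearMap.ker (t n))) :
    topDegree E = topDegree V := by
  refine IsGreatest.csSup_eq ⟨?_, ?_⟩
  · have finrank_pos : 0 < finrank k (V (topDegree V)) :=
      finrank_pos_iff_exists_ne_zero.mpr (exists_ne_zero_topDegree hbdd hne)
    refine (finrank_pos_iff_exists_ne_zero (R := k)).mp ?_
    rw [hE, finrank_ker_topDegree hbdd t]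
    exact Nat.add_pos_right _ finrank_pos
  · intro n hn
    by_contra! hlt
    have := subsingleton_of_topDegree_lt hbdd hlt
    have finrank_eq_zero : finrank k (E n) = 0 := by
      rw [hE, finrank_zero_of_subsingleton, finrank_zero_of_subsingleton]
    exact (finrank_pos_iff_exists_ne_zero.mpr hn).ne' finrank_eq_zero

theorem finrank_eq_one_of_finrank_add_finrank_ker {W W' : Type*} [AddCommGroup W] [Module k W]
    [FiniteDimensional k W] [AddCommGroup W'] [Module k W'] (f : W →ₗ[k] W')
    (h : finrank k W + finrank k (LinearMap.ker f) = 1) : finrank k W = 1 := by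
  have ker_le : finrank k (LinearMap.ker f) ≤ finrank k W := Submodule.finrank_le _
  lia

theorem biconnected_of_gysin_general
    [∀ n, FiniteDimensional k (V n)] [∀ n, FiniteDimensional k (E n)]
    (hbdd : ∃ N, ∀ n, N ≤ n → ∀ x : V n, x = 0) (hS : S 0 = ⊥)
    (hE : ∀ n, finrank k (E n) = finrank k (V n ⧸ S n) + finrank k (LinearMap.ker (t n)))
    (hconn : finrank k (E 0) = 1) (htop : finrank k (E (topDegree E)) = 1) :
    finrank k (V 0) = 1 ∧ finrank k (V (topDegree V)) = 1 ∧ topDegree V = topDegree E := by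
  have connected : finrank k (V 0) = 1 := by
    refine finrank_eq_one_of_finrank_add_finrank_ker (t 0) ?_
    rw [← (Submodule.quotEquivOfEqBot (S 0) hS).finrank_eq, ← hE, hconn]
  have nonzero : ∃ n, ∃ x : V n, x ≠ 0 :=
    ⟨0, finrank_pos_iff_exists_ne_zero.mp (connected ▸ Nat.one_pos)⟩
  have topDegree_eq : topDegree E = topDegree V := topDegree_eq_of_gysin hbdd nonzero hE
  have top_pos : 0 < finrank k (V (topDegree V)) :=
    finrank_pos_iff_exists_ne_zero.mpr (exists_ne_zero_topDegree hbdd nonzero)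
  have top_le : finrank k (V (topDegree V)) ≤ 1 := by
    rw [← htop, topDegree_eq, hE, finrank_ker_topDegree hbdd t]
    exact Nat.le_add_left _ _
  exact ⟨connected, le_antisymm top_le top_pos, topDegree_eq.symm⟩

end Gysin

/-- If in every degree n there is an isomorphism K0^n ≃ (K/tK)^n ⊕ (ker(t | K))^n and
K0 is bi-connected, then the nonzero finite graded F2[t]-module K is bi-connected
with norm K = norm K0. -/
theorem biconnected_of_gysin (K : GradedFMod) (hfin : K.IsFin) (hnz : K.Nontriv)
    (K₀ : ℕ → Type) [∀ i, AddCommGroup (K₀ i)] [∀ i, Module (ZMod 2) (K₀ i)]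
    (hK₀fin : ∀ i, FiniteDimensional (ZMod 2) (K₀ i))
    (hK₀bd : ∃ N, ∀ i, N ≤ i → ∀ x : K₀ i, x = 0)
    (hses : ∀ n, finrank (ZMod 2) (K₀ n) = K.coinvDim n + K.kerDim n)
    (hK₀conn : finrank (ZMod 2) (K₀ 0) = 1)
    (hK₀top : finrank (ZMod 2) (K₀ (sSup {k | ∃ x : K₀ k, x ≠ 0})) = 1) :
    finrank (ZMod 2) (K.V 0) = 1 ∧ finrank (ZMod 2) (K.V K.norm) = 1 ∧
      K.norm = sSup {k | ∃ x : K₀ k, x ≠ 0} := by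
  have := hfin.1
  exact biconnected_of_gysin_general hfin.2 rfl hses hK₀conn hK₀top
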